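/- arXiv:2512.06609 — 6 statements merged into one kernel-verified Lean document; each statement's English description precedes it below -/
import Mathlib

section
/- For every μ ∈ ℝ and σ > 0, the Gaussian interval mass satisfies the lower bound Φ(μ+σ) − Φ(μ−σ) ≥ √(2/π)·exp(−D(μ,σ) − |μσ| − 1/2). -/
/-!
Since `exp (-D(μ,σ)) = σ * exp (1/2 - (μ² + σ²)/2)`, the left-hand side equals
`2σ * φ(|μ| + σ)`: interval length times the value of `φ` at the largest modulus attained on
`[μ - σ, μ + σ]`. As `φ` is decreasing in `|x|`, this is at most the integral of `φ` over that
interval, which is `Φ(μ + σ) - Φ(μ - σ)`.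
-/

open MeasureTheory ProbabilityTheory Real

/-- The standard normal density φ(x) = (1/√(2π))·exp(−x²/2). -/
noncomputable def stdPdf (x : ℝ) : ℝ := (Real.sqrt (2 * Real.pi))⁻¹ * Real.exp (-x ^ 2 / 2)

/-- The standard normal CDF Φ(x) = ∫_{−∞}^{x} φ(u) du. -/
noncomputable def stdCdf (x : ℝ) : ℝ := ∫ u in Set.Iic x, stdPdf u

/-- KL divergence of N(μ,σ²) from N(0,1):
D(μ,σ) = (1/2)·(μ² + σ² − log(σ²) − 1). -/
noncomputable def gaussKL (μ σ : ℝ) : ℝ := (1 / 2) * (μ ^ 2 + σ ^ 2 - Real.log (σ ^ 2) - 1)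

/-- The product measure of K independent standard Gaussians on (Fin K → ℝ). -/
noncomputable def piGauss (K : ℕ) : Measure (Fin K → ℝ) :=
  Measure.pi fun _ => gaussianReal 0 1

/-- The large-error event A(μ,σ): no codeword lies strictly within distance σ of μ. -/
def largeError (K : ℕ) (μ σ : ℝ) : Set (Fin K → ℝ) := {c | ∀ j, σ ≤ |c j - μ|}

lemma stdPdf_integrable : Integrable stdPdf := by
  have h := (integrable_exp_neg_mul_sq (b := 1 / 2) (by norm_num)).const_mul
    (Real.sqrt (2 * Real.pi))⁻¹
  refine h.congr (Filter.Eventually.of_forall fun x => ?_)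
  simp only [stdPdf]
  ring_nf

lemma stdPdf_le_of_abs_le {x y : ℝ} (h : |x| ≤ y) : stdPdf y ≤ stdPdf x := by
  have h2 : x ^ 2 ≤ y ^ 2 := sq_le_sq' (abs_le.1 h).1 (abs_le.1 h).2
  unfold stdPdf
  gcongr

/-- Completing the square in the exponent, with `log (σ²) = 2 log σ`. -/
lemma bound_eq (μ σ : ℝ) (hσ : 0 < σ) :
    Real.sqrt (2 / Real.pi) * Real.exp (-gaussKL μ σ - |μ * σ| - 1 / 2) =
      2 * σ * stdPdf (|μ| + σ) := by
  have h1 : -gaussKL μ σ - |μ * σ| - 1 / 2 = Real.log σ + -(|μ| + σ) ^ 2 / 2 := by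
    rw [gaussKL, Real.log_pow, abs_mul, abs_of_pos hσ, ← sq_abs μ]
    push_cast
    ring
  have h2 : Real.sqrt (2 / Real.pi) = 2 * (Real.sqrt (2 * Real.pi))⁻¹ := by
    have h3 : (2 : ℝ) / Real.pi = 2 ^ 2 * (2 * Real.pi)⁻¹ := by
      have := Real.pi_pos
      field_simp
    rw [h3, Real.sqrt_mul (by positivity), Real.sqrt_sq (by norm_num), Real.sqrt_inv]
  rw [h1, Real.exp_add, Real.exp_log hσ, h2, stdPdf]
  ring

theorem stmt4 (μ σ : ℝ) (hσ : 0 < σ) :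
    Real.sqrt (2 / Real.pi) * Real.exp (-gaussKL μ σ - |μ * σ| - 1 / 2) ≤
      stdCdf (μ + σ) - stdCdf (μ - σ) := by
  rw [bound_eq μ σ hσ, stdCdf, stdCdf,
    intervalIntegral.integral_Iic_sub_Iic stdPdf_integrable.integrableOn
      stdPdf_integrable.integrableOn]
  have hc : ∫ _ in (μ - σ)..(μ + σ), stdPdf (|μ| + σ) = 2 * σ * stdPdf (|μ| + σ) := by
    rw [intervalIntegral.integral_const, smul_eq_mul]
    ring
  rw [← hc]
  refine intervalIntegral.integral_mono_on (by linarith) intervalIntegrable_const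
    stdPdf_integrable.intervalIntegrable fun x hx => stdPdf_le_of_abs_le ?_
  have := le_abs_self μ
  have := neg_abs_le μ
  exact abs_le.2 ⟨by linarith [hx.1], by linarith [hx.2]⟩
end

section
/- (Intermediate form of Theorem 1.) Let μ ∈ ℝ, σ > 0, and c₁ ∈ ℝ with |μ·σ| ≤ c₁. Then for every natural number K ≥ 1, the π_K-measure of the large-error event A(μ,σ) is at most exp(−K·√(2/π)·exp(−D(μ,σ) − c₁ − 1/2)). -/
/-!
A standard Gaussian density is at least `(√(2π))⁻¹ exp (-(|μ| + σ)² / 2)` on the ball of radius `σ`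
about `μ`, so a single codeword lands in that ball with probability at least
`p = 2σ (√(2π))⁻¹ exp (-(|μ| + σ)² / 2)`. Since `exp (-D(μ,σ) - 1/2) = σ exp (-(μ² + σ²) / 2)`, the
hypothesis `|μσ| ≤ c₁` makes `q = √(2/π) exp (-D(μ,σ) - c₁ - 1/2)` at most `p`
(`hit_probability_lower_bound`). By independence, the `K` codewords all miss the ball with
probability at most `(1 - q)^K ≤ exp (-K q)`.
-/

open MeasureTheory ProbabilityTheory Real

lemma hit_const_le (μ σ c₁ : ℝ) (hσ : 0 < σ) (hc₁ : |μ * σ| ≤ c₁) :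
    √(2 / π) * exp (-gaussKL μ σ - c₁ - 1 / 2) ≤
      (√(2 * π))⁻¹ * exp (-(|μ| + σ) ^ 2 / 2) * (2 * σ) := by
  have hlog : -gaussKL μ σ - c₁ - 1 / 2 = log σ + (-(μ ^ 2 + σ ^ 2) / 2 - c₁) := by
    rw [gaussKL, log_pow]; push_cast; ring
  have hsqrt : √(2 / π) = 2 * (√(2 * π))⁻¹ := by
    rw [sqrt_div zero_le_two, sqrt_mul zero_le_two, mul_inv]
    have h2 : √2 * √2 = 2 := mul_self_sqrt zero_le_two
    have : 0 < √π := sqrt_pos.2 pi_pos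
    field_simp
    linarith
  rw [hlog, exp_add, exp_log hσ, hsqrt]
  have hexp : exp (-(μ ^ 2 + σ ^ 2) / 2 - c₁) ≤ exp (-(|μ| + σ) ^ 2 / 2) := by
    rw [abs_mul, abs_of_pos hσ] at hc₁
    apply exp_le_exp.2
    nlinarith [sq_abs μ]
  calc _ = (2 * σ * (√(2 * π))⁻¹) * exp (-(μ ^ 2 + σ ^ 2) / 2 - c₁) := by ring
    _ ≤ (2 * σ * (√(2 * π))⁻¹) * exp (-(|μ| + σ) ^ 2 / 2) := by gcongr
    _ = _ := by ring

/-- Every point of the ball has absolute value at most `|μ| + σ`, which bounds the density below by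
a constant there; integrate this constant over the ball, of length `2σ`. -/
lemma hit_probability_lower_bound (μ σ c₁ : ℝ) (hσ : 0 < σ) (hc₁ : |μ * σ| ≤ c₁) :
    ENNReal.ofReal (√(2 / π) * exp (-gaussKL μ σ - c₁ - 1 / 2)) ≤
      gaussianReal 0 1 (Metric.ball μ σ) := by
  refine (ENNReal.ofReal_le_ofReal (hit_const_le μ σ c₁ hσ hc₁)).trans ?_
  rw [gaussianReal_apply _ one_ne_zero, ENNReal.ofReal_mul (by positivity), ← Real.volume_ball,
    ← setLIntegral_const]
  refine setLIntegral_mono' measurableSet_ball fun x hx => ENNReal.ofReal_le_ofReal ?_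
  rw [Metric.mem_ball, Real.dist_eq] at hx
  have hx' : |x| ≤ |μ| + σ := by
    have := abs_sub_abs_le_abs_sub x μ
    linarith
  have hsq : x ^ 2 ≤ (|μ| + σ) ^ 2 := sq_le_sq' (abs_le.1 hx').1 (abs_le.1 hx').2
  simp only [gaussianPDFReal, NNReal.coe_one, mul_one, sub_zero]
  gcongr

theorem stmt8 (μ σ c₁ : ℝ) (hσ : 0 < σ) (hc₁ : |μ * σ| ≤ c₁)
    (K : ℕ) (hK : 1 ≤ K) :
    piGauss K (largeError K μ σ) ≤
      ENNReal.ofReal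
        (Real.exp (-(K : ℝ) * (Real.sqrt (2 / Real.pi) *
          Real.exp (-gaussKL μ σ - c₁ - 1 / 2)))) := by
  set q := √(2 / π) * exp (-gaussKL μ σ - c₁ - 1 / 2) with hq
  have hq0 : 0 ≤ q := by positivity
  have hset : largeError K μ σ = Set.univ.pi fun _ => (Metric.ball μ σ)ᶜ := by
    ext c
    simp [largeError, Real.dist_eq]
  have hmiss : gaussianReal 0 1 (Metric.ball μ σ)ᶜ ≤ ENNReal.ofReal (exp (-q)) := by
    rw [prob_compl_eq_one_sub measurableSet_ball]
    calc 1 - gaussianReal 0 1 (Metric.ball μ σ) ≤ 1 - ENNReal.ofReal q :=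
          tsub_le_tsub_left (hit_probability_lower_bound μ σ c₁ hσ hc₁) 1
      _ = ENNReal.ofReal (1 - q) := by rw [ENNReal.ofReal_sub _ hq0, ENNReal.ofReal_one]
      _ ≤ ENNReal.ofReal (exp (-q)) := ENNReal.ofReal_le_ofReal (one_sub_le_exp_neg q)
  rw [hset, piGauss, Measure.pi_pi, Finset.prod_const, Finset.card_univ, Fintype.card_fin]
  calc _ ≤ ENNReal.ofReal (exp (-q)) ^ K := pow_le_pow_left' hmiss K
    _ = _ := by
      rw [← ENNReal.ofReal_pow (exp_pos _).le, ← Real.exp_nat_mul, mul_neg, neg_mul]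
end

section
/- (Theorem 1, achievability.) Let μ ∈ ℝ, σ > 0, and c₁ ∈ ℝ with |μ·σ| ≤ c₁. Let t ∈ ℝ and let K be a natural number with log K ≥ D(μ,σ) + t (equivalently (K:ℝ) ≥ exp(D(μ,σ) + t)). Then the π_K-measure of the large-error event A(μ,σ) is at most exp(−exp(t)·√(2/π)·exp(−c₁ − 1/2)); in other words, the probability that the nearest codeword to μ is at distance at least σ decays doubly exponentially in the number of nats t by which the codebook bitrate log K exceeds the bits-back coding bitrate D(μ,σ). -/
/-!
A single codeword lands in `(μ - σ, μ + σ)` with probability at least `p = 2σ · m`, where `m` is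
any lower bound for the standard normal density on that interval. For `|x - μ| < σ` we have
`x² ≤ μ² + σ² + 2|μσ|`, so `m = (2π)^(-1/2) exp(-(μ² + σ²)/2 - c₁)` works
(`gaussianReal_Ioo_ge`). Independence bounds the probability of the large-error event by
`(1 - p)^K ≤ exp(-K p)`. Since `exp D(μ,σ) = exp((μ² + σ² - 1)/2) / σ`
(`exp_gaussKL_mul_bound`), the powers of `σ` and the quadratic exponents cancel in `K p`.
-/

open MeasureTheory ProbabilityTheory Real

/-- On `|x - μ| < σ` the standard normal density is at least
`(2π)^(-1/2) exp(-(μ² + σ²)/2 - c₁)`, and the interval has length `2σ`. -/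
lemma gaussianReal_Ioo_ge (μ σ c₁ : ℝ) (hσ : 0 < σ) (hc₁ : |μ * σ| ≤ c₁) :
    2 * σ * ((√(2 * π))⁻¹ * exp (-(μ ^ 2 + σ ^ 2) / 2 - c₁)) ≤
      (gaussianReal 0 1).real (Set.Ioo (μ - σ) (μ + σ)) := by
  set m : ℝ := (√(2 * π))⁻¹ * exp (-(μ ^ 2 + σ ^ 2) / 2 - c₁) with hm
  have hm0 : 0 ≤ m := by positivity
  have hpt : ∀ x ∈ Set.Ioo (μ - σ) (μ + σ), ENNReal.ofReal m ≤ gaussianPDF 0 1 x := by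
    intro x hx
    rw [gaussianPDF, gaussianPDFReal]
    apply ENNReal.ofReal_le_ofReal
    simp only [NNReal.coe_one, mul_one, sub_zero]
    rw [hm]
    gcongr
    have habs : |x - μ| ≤ σ := abs_le.2 ⟨by linarith [hx.1], by linarith [hx.2]⟩
    have hsq : (x - μ) ^ 2 ≤ σ ^ 2 := sq_le_sq' (abs_le.1 habs).1 (abs_le.1 habs).2
    have hcross : μ * (x - μ) ≤ c₁ :=
      calc μ * (x - μ) ≤ |μ| * |x - μ| := (le_abs_self _).trans (abs_mul _ _).le
        _ ≤ |μ| * σ := by gcongr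
        _ = |μ * σ| := by rw [abs_mul, abs_of_pos hσ]
        _ ≤ c₁ := hc₁
    nlinarith
  have h : ENNReal.ofReal (2 * σ * m) ≤ gaussianReal 0 1 (Set.Ioo (μ - σ) (μ + σ)) := by
    rw [gaussianReal_apply _ one_ne_zero]
    calc ENNReal.ofReal (2 * σ * m)
        = ∫⁻ _ in Set.Ioo (μ - σ) (μ + σ), ENNReal.ofReal m := by
          rw [setLIntegral_const, Real.volume_Ioo, ← ENNReal.ofReal_mul hm0]
          congr 1
          ring
      _ ≤ _ := setLIntegral_mono' measurableSet_Ioo hpt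
  exact (ENNReal.ofReal_le_iff_le_toReal (measure_ne_top _ _)).1 h

/-- The bits-back rate `gaussKL μ σ` exactly compensates the single-codeword hitting bound. -/
lemma exp_gaussKL_mul_bound (μ σ c₁ t : ℝ) (hσ : 0 < σ) :
    exp (gaussKL μ σ + t) * (2 * σ * ((√(2 * π))⁻¹ * exp (-(μ ^ 2 + σ ^ 2) / 2 - c₁))) =
      exp t * (√(2 / π) * exp (-c₁ - 1 / 2)) := by
  have hsqrt : √(2 / π) = 2 * (√(2 * π))⁻¹ := by
    rw [show 2 / π = 2 ^ 2 / (2 * π) by field_simp, Real.sqrt_div (by norm_num),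
      Real.sqrt_sq (by norm_num), div_eq_mul_inv]
  have hexp : exp (gaussKL μ σ + t) * (σ * exp (-(μ ^ 2 + σ ^ 2) / 2 - c₁)) =
      exp t * exp (-c₁ - 1 / 2) := by
    nth_rewrite 2 [← Real.exp_log hσ]
    rw [← Real.exp_add, ← Real.exp_add, ← Real.exp_add, gaussKL, Real.log_pow]
    congr 1
    push_cast
    ring
  rw [hsqrt]
  linear_combination 2 * (√(2 * π))⁻¹ * hexp

/-- The codewords are independent, so all of them miss `(μ - σ, μ + σ)` with probability
`(1 - p)^K`, where `p` is the Gaussian mass of that interval. -/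
lemma piGauss_largeError (K : ℕ) (μ σ : ℝ) :
    piGauss K (largeError K μ σ) =
      ENNReal.ofReal ((1 - (gaussianReal 0 1).real (Set.Ioo (μ - σ) (μ + σ))) ^ K) := by
  have hset : largeError K μ σ = Set.univ.pi fun _ => (Set.Ioo (μ - σ) (μ + σ))ᶜ := by
    ext c
    simp only [largeError, Set.mem_ofPred_eq, Set.mem_pi, Set.mem_univ, true_implies,
      ← Real.ball_eq_Ioo, Set.mem_compl_iff, Metric.mem_ball, Real.dist_eq, not_lt]
  rw [hset, piGauss, Measure.pi_pi, Finset.prod_const, Finset.card_univ, Fintype.card_fin,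
    ← probReal_compl_eq_one_sub measurableSet_Ioo, ENNReal.ofReal_pow measureReal_nonneg,
    ofReal_measureReal]

theorem stmt9 (μ σ c₁ t : ℝ) (hσ : 0 < σ) (hc₁ : |μ * σ| ≤ c₁)
    (K : ℕ) (hK : Real.exp (gaussKL μ σ + t) ≤ (K : ℝ)) :
    piGauss K (largeError K μ σ) ≤
      ENNReal.ofReal
        (Real.exp (-Real.exp t * (Real.sqrt (2 / Real.pi) *
          Real.exp (-c₁ - 1 / 2)))) := by
  set p := (gaussianReal 0 1).real (Set.Ioo (μ - σ) (μ + σ)) with hp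
  have hp1 : p ≤ 1 := measureReal_le_one
  have hKp : exp t * (√(2 / π) * exp (-c₁ - 1 / 2)) ≤ K * p := by
    rw [← exp_gaussKL_mul_bound μ σ c₁ t hσ]
    exact mul_le_mul hK (gaussianReal_Ioo_ge μ σ c₁ hσ hc₁) (by positivity) (by positivity)
  rw [piGauss_largeError]
  apply ENNReal.ofReal_le_ofReal
  calc (1 - p) ^ K ≤ exp (-p) ^ K :=
        pow_le_pow_left₀ (by linarith) (Real.one_sub_le_exp_neg p) K
    _ = exp (-(K * p)) := by rw [← Real.exp_nat_mul]; ring_nf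
    _ ≤ _ := Real.exp_le_exp.2 (by linarith)
end

section
/- (Intermediate form of Theorem 2.) Let μ ∈ ℝ, σ > 0, and c₂ ∈ ℝ with |μ| + σ ≤ c₂. Then for every natural number K ≥ 1, the π_K-measure of the large-error event A(μ,σ) is at least 1 − K·√(2/π)·exp(−D(μ,σ) + (1/2)c₂² − 1/2). -/
/-!
The event complementary to `largeError` is a union of `K` events "the `j`-th codeword lies in the
ball of radius `σ` around `μ`". The standard Gaussian density is at most `1/√(2π)`, so each of
these has probability at most `2σ/√(2π) = √(2/π) σ` (`gaussian_ball_le`). On the other hand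
`exp (-D + c₂²/2 - 1/2) = σ exp ((c₂² - μ² - σ²)/2)`, which is at least `σ` because
`c₂ ≥ |μ| + σ` gives `c₂² ≥ μ² + σ²` (`le_exp_neg_gaussKL`). The union bound concludes.
-/

open MeasureTheory ProbabilityTheory Real

lemma gaussian_ball_le (μ σ : ℝ) :
    gaussianReal 0 1 (Metric.ball μ σ) ≤ ENNReal.ofReal (√(2 / π) * σ) := by
  have hconst : (√(2 * π))⁻¹ * (2 * σ) = √(2 / π) * σ := by
    have h2 : √2 * √2 = 2 := Real.mul_self_sqrt (by norm_num)
    have hπ : √π ≠ 0 := (Real.sqrt_pos.2 Real.pi_pos).ne'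
    rw [Real.sqrt_mul (by norm_num), Real.sqrt_div (by norm_num)]
    field_simp
    linear_combination (-σ) * h2
  rw [gaussianReal_apply 0 one_ne_zero]
  calc ∫⁻ x in Metric.ball μ σ, gaussianPDF 0 1 x
      ≤ ∫⁻ _ in Metric.ball μ σ, ENNReal.ofReal ((√(2 * π))⁻¹) := by
        refine lintegral_mono fun x => ENNReal.ofReal_le_ofReal ?_
        simp only [gaussianPDFReal, NNReal.coe_one, mul_one]
        refine mul_le_of_le_one_right (by positivity) (Real.exp_le_one_iff.2 ?_)
        have := sq_nonneg (x - 0)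
        linarith
    _ = ENNReal.ofReal (√(2 / π) * σ) := by
        rw [setLIntegral_const, Real.volume_ball, ← ENNReal.ofReal_mul (by positivity), hconst]

lemma le_exp_neg_gaussKL {μ σ c₂ : ℝ} (hσ : 0 < σ) (hc₂ : |μ| + σ ≤ c₂) :
    σ ≤ Real.exp (-gaussKL μ σ + (1 / 2) * c₂ ^ 2 - 1 / 2) := by
  have hsq : μ ^ 2 + σ ^ 2 ≤ c₂ ^ 2 := by
    have := abs_nonneg μ
    rw [← sq_abs μ]
    nlinarith
  rw [← Real.log_le_iff_le_exp hσ, gaussKL, Real.log_pow]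
  push_cast
  linarith

theorem stmt11 (μ σ c₂ : ℝ) (hσ : 0 < σ) (hc₂ : |μ| + σ ≤ c₂)
    (K : ℕ) (hK : 1 ≤ K) :
    ENNReal.ofReal
        (1 - (K : ℝ) * (Real.sqrt (2 / Real.pi) *
          Real.exp (-gaussKL μ σ + (1 / 2) * c₂ ^ 2 - 1 / 2))) ≤
      piGauss K (largeError K μ σ) := by
  set b := √(2 / π) * Real.exp (-gaussKL μ σ + (1 / 2) * c₂ ^ 2 - 1 / 2)
  have hb0 : 0 ≤ b := by positivity
  have : IsProbabilityMeasure (piGauss K) := by unfold piGauss; infer_instance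
  have hcompl : (largeError K μ σ)ᶜ = ⋃ j, Function.eval j ⁻¹' Metric.ball μ σ := by
    ext c
    simp [largeError, Real.dist_eq]
  have hball (j : Fin K) :
      piGauss K (Function.eval j ⁻¹' Metric.ball μ σ) ≤ ENNReal.ofReal b := by
    rw [piGauss, (measurePreserving_eval (fun _ : Fin K => gaussianReal 0 1) j).measure_preimage
      measurableSet_ball.nullMeasurableSet]
    refine (gaussian_ball_le μ σ).trans (ENNReal.ofReal_le_ofReal ?_)
    exact mul_le_mul_of_nonneg_left (le_exp_neg_gaussKL hσ hc₂) (by positivity)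
  clear_value b
  have hunion : piGauss K (largeError K μ σ)ᶜ ≤ ENNReal.ofReal (K * b) := by
    rw [hcompl]
    calc _ ≤ ∑ j, piGauss K (Function.eval j ⁻¹' Metric.ball μ σ) := measure_iUnion_fintype_le _ _
      _ ≤ ∑ _ : Fin K, ENNReal.ofReal b := Finset.sum_le_sum fun j _ => hball j
      _ = ENNReal.ofReal (K * b) := by simp [ENNReal.ofReal_mul]
  rw [ENNReal.ofReal_sub _ (by positivity), ENNReal.ofReal_one, tsub_le_iff_right]
  calc (1 : ENNReal) = piGauss K (largeError K μ σ ∪ (largeError K μ σ)ᶜ) := by simp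
    _ ≤ piGauss K (largeError K μ σ) + piGauss K (largeError K μ σ)ᶜ := measure_union_le _ _
    _ ≤ _ := by gcongr
end

section
/- (Theorem 2, converse.) Let μ ∈ ℝ, σ > 0, and c₂ ∈ ℝ with |μ| + σ ≤ c₂. Let t ∈ ℝ and let K be a natural number with K ≥ 1 and log K ≤ D(μ,σ) − t (equivalently (K:ℝ) ≤ exp(D(μ,σ) − t)). Then the π_K-measure of the large-error event A(μ,σ) is at least 1 − exp(−t)·√(2/π)·exp((1/2)c₂² − 1/2); in other words, the probability that the nearest codeword to μ is at distance at least σ increases exponentially in the number of nats t by which the codebook bitrate log K falls below the bits-back coding bitrate D(μ,σ). -/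
/-!
The proof is a union bound. Since the standard Gaussian density is at most `1/√(2π)`, a single
codeword lies within distance `σ` of `μ` with probability at most `2σ/√(2π) = σ√(2/π)`
(`gaussianReal_ball_le`), so some codeword does with probability at most `K σ √(2/π)`
(`piGauss_largeError_compl_le`). As `σ² = exp (log σ²)`, the hypothesis on `K` reads
`K σ ≤ exp (-t) exp ((μ² + σ² - 1)/2)`, and `μ² + σ² ≤ (|μ| + σ)² ≤ c₂²`.
-/

open MeasureTheory ProbabilityTheory Real

lemma gaussianReal_ball_le (μ σ : ℝ) :
    gaussianReal 0 1 (Metric.ball μ σ) ≤ ENNReal.ofReal (σ * Real.sqrt (2 / Real.pi)) := by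
  have h2 : (2 : ℝ) * (Real.sqrt (2 * Real.pi))⁻¹ = Real.sqrt (2 / Real.pi) := by
    rw [Real.sqrt_mul (by norm_num), Real.sqrt_div (by norm_num)]
    have := Real.sqrt_pos.2 Real.pi_pos
    have h := Real.mul_self_sqrt (show (0 : ℝ) ≤ 2 by norm_num)
    field_simp
    nlinarith
  rw [gaussianReal_apply 0 one_ne_zero]
  calc ∫⁻ x in Metric.ball μ σ, gaussianPDF 0 1 x
      ≤ ∫⁻ _ in Metric.ball μ σ, ENNReal.ofReal (Real.sqrt (2 * Real.pi))⁻¹ := by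
        refine lintegral_mono fun x => ENNReal.ofReal_le_ofReal ?_
        simp only [gaussianPDFReal, NNReal.coe_one, mul_one, sub_zero]
        refine mul_le_of_le_one_right (by positivity) (Real.exp_le_one_iff.2 ?_)
        have := sq_nonneg x
        linarith
    _ = ENNReal.ofReal (σ * Real.sqrt (2 / Real.pi)) := by
        rw [setLIntegral_const, Real.volume_ball, ← ENNReal.ofReal_mul (by positivity), ← h2]
        congr 1
        ring

lemma piGauss_largeError_compl_le (K : ℕ) (μ σ : ℝ) :
    piGauss K (largeError K μ σ)ᶜ ≤ ENNReal.ofReal (K * (σ * Real.sqrt (2 / Real.pi))) := by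
  have hset : (largeError K μ σ)ᶜ = ⋃ j, Function.eval j ⁻¹' Metric.ball μ σ := by
    ext c
    simp [largeError, Real.dist_eq]
  have hj (j : Fin K) : piGauss K (Function.eval j ⁻¹' Metric.ball μ σ) ≤
      ENNReal.ofReal (σ * Real.sqrt (2 / Real.pi)) := by
    rw [piGauss, (measurePreserving_eval (fun _ : Fin K => gaussianReal 0 1) j).measure_preimage
      Metric.isOpen_ball.measurableSet.nullMeasurableSet]
    exact gaussianReal_ball_le μ σ
  calc piGauss K (largeError K μ σ)ᶜ
      ≤ ∑ j : Fin K, piGauss K (Function.eval j ⁻¹' Metric.ball μ σ) := by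
        rw [hset]
        exact measure_iUnion_fintype_le _ _
    _ ≤ ∑ _j : Fin K, ENNReal.ofReal (σ * Real.sqrt (2 / Real.pi)) :=
        Finset.sum_le_sum fun j _ => hj j
    _ = _ := by
        rw [ENNReal.ofReal_mul (Nat.cast_nonneg K)]
        simp

theorem stmt12 (μ σ c₂ t : ℝ) (hσ : 0 < σ) (hc₂ : |μ| + σ ≤ c₂)
    (K : ℕ) (hK : 1 ≤ K) (hKle : (K : ℝ) ≤ Real.exp (gaussKL μ σ - t)) :
    ENNReal.ofReal
        (1 - Real.exp (-t) * (Real.sqrt (2 / Real.pi) *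
          Real.exp ((1 / 2) * c₂ ^ 2 - 1 / 2))) ≤
      piGauss K (largeError K μ σ) := by
  have hexp : (K : ℝ) * σ ≤ Real.exp (-t) * Real.exp ((1 / 2) * c₂ ^ 2 - 1 / 2) := by
    have hsq : μ ^ 2 + σ ^ 2 ≤ c₂ ^ 2 := by
      nlinarith [abs_nonneg μ, sq_abs μ, mul_nonneg (abs_nonneg μ) hσ.le]
    calc (K : ℝ) * σ ≤ Real.exp (gaussKL μ σ - t) * Real.exp (Real.log σ) := by
          rw [Real.exp_log hσ]
          gcongr
      _ = Real.exp (gaussKL μ σ - t + Real.log σ) := (Real.exp_add _ _).symm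
      _ ≤ Real.exp (-t + ((1 / 2) * c₂ ^ 2 - 1 / 2)) := by
          apply Real.exp_le_exp.2
          rw [gaussKL, Real.log_pow]
          push_cast
          linarith
      _ = _ := Real.exp_add _ _
  have hbound : piGauss K (largeError K μ σ)ᶜ ≤ ENNReal.ofReal
      (Real.exp (-t) * (Real.sqrt (2 / Real.pi) * Real.exp ((1 / 2) * c₂ ^ 2 - 1 / 2))) := by
    refine (piGauss_largeError_compl_le K μ σ).trans (ENNReal.ofReal_le_ofReal ?_)
    have := mul_le_mul_of_nonneg_right hexp (Real.sqrt_nonneg (2 / Real.pi))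
    linarith
  have : IsProbabilityMeasure (piGauss K) := by
    unfold piGauss
    infer_instance
  rw [ENNReal.ofReal_sub _ (by positivity), ENNReal.ofReal_one, tsub_le_iff_right]
  calc (1 : ENNReal) = piGauss K (largeError K μ σ ∪ (largeError K μ σ)ᶜ) := by
        rw [Set.union_compl_self, measure_univ]
    _ ≤ piGauss K (largeError K μ σ) + piGauss K (largeError K μ σ)ᶜ := measure_union_le _ _
    _ ≤ _ := by gcongr
end

section
/- (Corollary 3, error in pixel space.) Let μ ∈ ℝ, σ > 0, c₁ ∈ ℝ with |μ·σ| ≤ c₁, t ∈ ℝ, and let K be a natural number with K ≥ 1 and log K ≥ D(μ,σ) + t. Let ẑ be a measurable nearest-codeword selector for μ, let c₃ > 0, and let g : ℝ → ℝ satisfy |g(x) − g(y)| ≤ c₃·|x − y| for all x, y ∈ ℝ. Then the π_K-measure of the event {c : |g(ẑ(c)) − g(μ)| ≥ c₃·σ} is at most exp(−exp(t)·√(2/π)·exp(−c₁ − 1/2)). -/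
/-!
The map `g` is `c₃`-Lipschitz, so an error of size `c₃ * σ` in its image forces `σ ≤ |ẑ(c) - μ|`, and
then every codeword lies outside the open ball `B(μ, σ)`. By independence this has probability
`(1 - p) ^ K ≤ exp (-K * p)`, where `p` is the standard Gaussian mass of that ball.

On the ball, `x ^ 2 ≤ μ ^ 2 + 2 * |μ * σ| + σ ^ 2`, so the density is at least
`(√(2π))⁻¹ * exp (-(μ ^ 2 + σ ^ 2) / 2 - c₁)`; the ball has length `2 * σ`
(`ofReal_ballMassBound_le`). Multiplying the resulting lower bound for `p` by
`K ≥ exp (D(μ, σ) + t)` cancels `μ` and `σ` and leaves the constant of the theorem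
(`exponent_le_card_mul_ballMassBound`).
-/


open MeasureTheory ProbabilityTheory Real

/-- Lower bound for the standard Gaussian mass of the open ball `B(μ, σ)` when `|μ * σ| ≤ c`: the
length of the ball times a pointwise lower bound for the density on it. -/
noncomputable def ballMassBound (μ σ c : ℝ) : ℝ :=
  (Real.sqrt (2 * Real.pi))⁻¹ * Real.exp (-(μ ^ 2 + σ ^ 2) / 2 - c) * (2 * σ)

lemma sq_le_of_mem_ball {μ σ c x : ℝ} (hc : |μ * σ| ≤ c) (hx : x ∈ Metric.ball μ σ) :
    x ^ 2 ≤ μ ^ 2 + 2 * c + σ ^ 2 := by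
  rw [Metric.mem_ball, Real.dist_eq] at hx
  have h1 : |x - μ| ^ 2 ≤ σ ^ 2 := pow_le_pow_left₀ (abs_nonneg _) hx.le 2
  rw [sq_abs] at h1
  have h2 : μ * (x - μ) ≤ |μ * σ| := by
    calc μ * (x - μ) ≤ |μ * (x - μ)| := le_abs_self _
      _ = |μ| * |x - μ| := abs_mul _ _
      _ ≤ |μ| * |σ| :=
        mul_le_mul_of_nonneg_left (hx.le.trans (le_abs_self σ)) (abs_nonneg _)
      _ = |μ * σ| := (abs_mul _ _).symm
  nlinarith

lemma ofReal_ballMassBound_le {μ σ c : ℝ} (hc : |μ * σ| ≤ c) :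
    ENNReal.ofReal (ballMassBound μ σ c) ≤ gaussianReal 0 1 (Metric.ball μ σ) := by
  rw [gaussianReal_apply 0 one_ne_zero, ballMassBound, ENNReal.ofReal_mul (by positivity),
    ← Real.volume_ball μ σ, ← setLIntegral_const]
  refine setLIntegral_mono' Metric.isOpen_ball.measurableSet fun x hx => ?_
  rw [gaussianPDF, gaussianPDFReal]
  refine ENNReal.ofReal_le_ofReal ?_
  have h := sq_le_of_mem_ball hc hx
  simp only [NNReal.coe_one, mul_one, sub_zero]
  gcongr
  linarith

lemma exponent_le_card_mul_ballMassBound {μ σ c t : ℝ} (hσ : 0 < σ) {K : ℕ} (hK : 1 ≤ K)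
    (hKlog : gaussKL μ σ + t ≤ Real.log (K : ℝ)) :
    Real.exp t * (Real.sqrt (2 / Real.pi) * Real.exp (-c - 1 / 2)) ≤
      K * ballMassBound μ σ c := by
  have hK0 : (0 : ℝ) < K := by exact_mod_cast hK
  have hq : 0 ≤ ballMassBound μ σ c := by unfold ballMassBound; positivity
  have hexp : Real.exp (gaussKL μ σ + t) ≤ K := (Real.le_log_iff_exp_le hK0).1 hKlog
  refine le_trans (le_of_eq ?_) (mul_le_mul_of_nonneg_right hexp hq)
  have h1 : gaussKL μ σ + t = (μ ^ 2 + σ ^ 2) / 2 - 1 / 2 + t - Real.log σ := by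
    rw [gaussKL, Real.log_pow]; push_cast; ring
  have h2 : Real.sqrt (2 / Real.pi) = 2 * (Real.sqrt (2 * Real.pi))⁻¹ := by
    rw [show (2 : ℝ) / Real.pi = 2 ^ 2 * (2 * Real.pi)⁻¹ by field_simp,
      Real.sqrt_mul (by positivity), Real.sqrt_sq (by norm_num), Real.sqrt_inv]
  have h3 : Real.exp t * Real.exp (-c - 1 / 2) =
      Real.exp ((μ ^ 2 + σ ^ 2) / 2 - 1 / 2 + t) *
        Real.exp (-(μ ^ 2 + σ ^ 2) / 2 - c) := by
    rw [← Real.exp_add, ← Real.exp_add]; congr 1; ring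
  rw [h1, h2, Real.exp_sub _ (Real.log σ), Real.exp_log hσ, ballMassBound]
  generalize Real.exp t = a, Real.exp (-c - 1 / 2) = b,
    Real.exp ((μ ^ 2 + σ ^ 2) / 2 - 1 / 2 + t) = d,
    Real.exp (-(μ ^ 2 + σ ^ 2) / 2 - c) = e at h3 ⊢
  field_simp
  linear_combination h3

lemma piGauss_largeError_le {μ σ c : ℝ} (hc : |μ * σ| ≤ c) (K : ℕ) :
    piGauss K (largeError K μ σ) ≤ ENNReal.ofReal (Real.exp (-(K * ballMassBound μ σ c))) := by
  have hset : largeError K μ σ = Set.univ.pi fun _ => (Metric.ball μ σ)ᶜ := by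
    ext x
    simp [largeError, Real.dist_eq]
  have hone : gaussianReal 0 1 (Metric.ball μ σ)ᶜ ≤
      ENNReal.ofReal (Real.exp (-ballMassBound μ σ c)) := by
    rw [prob_compl_eq_one_sub Metric.isOpen_ball.measurableSet, tsub_le_iff_right]
    calc (1 : ENNReal) = ENNReal.ofReal 1 := ENNReal.ofReal_one.symm
      _ ≤ ENNReal.ofReal (Real.exp (-ballMassBound μ σ c) + ballMassBound μ σ c) :=
        ENNReal.ofReal_le_ofReal (by linarith [Real.add_one_le_exp (-ballMassBound μ σ c)])
      _ ≤ _ := ENNReal.ofReal_add_le.trans (by gcongr; exact ofReal_ballMassBound_le hc)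
  rw [hset, piGauss, Measure.pi_pi, Finset.prod_const, Finset.card_univ, Fintype.card_fin,
    ← mul_neg, Real.exp_nat_mul, ENNReal.ofReal_pow (Real.exp_pos _).le]
  gcongr

theorem stmt14 (μ σ c₁ t : ℝ) (hσ : 0 < σ) (hc₁ : |μ * σ| ≤ c₁)
    (K : ℕ) (hK : 1 ≤ K) (hKlog : gaussKL μ σ + t ≤ Real.log (K : ℝ))
    (zhat : (Fin K → ℝ) → ℝ) (hmeas : Measurable zhat)
    (hsel : ∀ c : Fin K → ℝ,
      ∃ j : Fin K, zhat c = c j ∧ ∀ j' : Fin K, |zhat c - μ| ≤ |c j' - μ|)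
    (c₃ : ℝ) (hc₃ : 0 < c₃) (g : ℝ → ℝ)
    (hg : ∀ x y : ℝ, |g x - g y| ≤ c₃ * |x - y|) :
    piGauss K {c : Fin K → ℝ | c₃ * σ ≤ |g (zhat c) - g μ|} ≤
      ENNReal.ofReal
        (Real.exp (-Real.exp t * (Real.sqrt (2 / Real.pi) *
          Real.exp (-c₁ - 1 / 2)))) := by
  have hsub : {c : Fin K → ℝ | c₃ * σ ≤ |g (zhat c) - g μ|} ⊆ largeError K μ σ := by
    intro c hc j
    obtain ⟨-, -, hmin⟩ := hsel c
    exact (le_of_mul_le_mul_left (le_trans hc (hg _ _)) hc₃).trans (hmin j)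
  refine (measure_mono hsub).trans ((piGauss_largeError_le hc₁ K).trans ?_)
  refine ENNReal.ofReal_le_ofReal (Real.exp_le_exp.2 ?_)
  have := exponent_le_card_mul_ballMassBound (c := c₁) hσ hK hKlog
  linarith
end
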